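/- (Theorem 3.3, power part, full bootstrap.) Assume the alternative hypothesis p ≠ q with δ_K > 0. Let α_level ∈ (0,1), define λ₁ = √(8 log(4/α_level)) and the threshold t_thres = 4 λ₁ √(ν/(c_a n)). If for some λ₂ > 0, n > (1/c_a) · max{ max{λ₁, λ₂}²/(9 ν), (ν/δ_K²)·(4(λ₁ + λ₂))² }, then the probability (under the joint product law of the four samples) that T̂_a ≤ t_thres is at most 4 e^{−λ₂²/8}. -/

import Mathlib

open MeasureTheory Real
open scoped BigOperators ENNReal

/-- The asymmetric empirical MMD statistic `T̂_a` of kernel `K`, computed between the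
training sample `dtr = (X₍₁₎, Y₍₁₎)` and the test sample `dte = (X₍₂₎, Y₍₂₎)`. -/
noncomputable def asymMMD {𝒳 : Type*} (K : 𝒳 → 𝒳 → ℝ) (n1X n1Y n2X n2Y : ℕ)
    (dtr : (Fin n1X → 𝒳) × (Fin n1Y → 𝒳))
    (dte : (Fin n2X → 𝒳) × (Fin n2Y → 𝒳)) : ℝ :=
  (1/((n2X:ℝ)*(n1X:ℝ))) * ∑ i, ∑ j, K (dte.1 i) (dtr.1 j)
  - (1/((n2X:ℝ)*(n1Y:ℝ))) * ∑ i, ∑ j, K (dte.1 i) (dtr.2 j)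
  - (1/((n2Y:ℝ)*(n1X:ℝ))) * ∑ i, ∑ j, K (dte.2 i) (dtr.1 j)
  + (1/((n2Y:ℝ)*(n1Y:ℝ))) * ∑ i, ∑ j, K (dte.2 i) (dtr.2 j)

/-- The squared population MMD `δ_K = ∬ K d(p−q)d(p−q)`, written out as
`∬K dp dp − 2∬K dp dq + ∬K dq dq`. -/
noncomputable def deltaK {𝒳 : Type*} [MeasurableSpace 𝒳] (K : 𝒳 → 𝒳 → ℝ)
    (p q : Measure 𝒳) : ℝ :=
  (∫ x, ∫ y, K x y ∂p ∂p) - 2 * (∫ x, ∫ y, K x y ∂q ∂p) + (∫ x, ∫ y, K x y ∂q ∂q)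

/-!
With `N` the smaller of the two sample sizes, the average of `K (x i) (y j)` over all `a * b`
pairs is itself an average, over the `a * b` cyclic shifts of the two samples, of means over `N`
disjoint pairs, and each of these is a mean of `N` i.i.d. terms (Hoeffding's trick for
U-statistics). Convexity of `exp` then bounds its moment generating function by that of `N`
i.i.d. terms, and a Bernstein-type Chernoff argument gives a deviation probability `exp (-λ² / 8)`
at distance `λ √(ν / m)` from the mean. Since `T̂_a` is a signed sum of four such averages with
mean `δ_K`, falling below `δ_K - 4 λ₂ √(ν / m)` costs at most four times that probability, and the
sample size condition puts the threshold `4 λ₁ √(ν / m)` below this level.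
-/

open ProbabilityTheory

section Moments

variable {Ω : Type*} [MeasurableSpace Ω] {μ : Measure Ω} {X : Ω → ℝ}

lemma integral_exp_le_exp_integral_sq [IsProbabilityMeasure μ] (hX : AEStronglyMeasurable X μ)
    (hbound : ∀ᵐ ω ∂μ, |X ω| ≤ 1) (hmean : ∫ ω, X ω ∂μ ≤ 0) :
    ∫ ω, exp (X ω) ∂μ ≤ exp (∫ ω, X ω ^ 2 ∂μ) := by
  have hint : Integrable X μ := .of_bound hX 1 hbound
  have hint_sq : Integrable (fun ω => X ω ^ 2) μ :=
    .of_bound (hX.pow 2) 1 (hbound.mono fun ω hω => by simpa using hω)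
  have hint_one_add : Integrable (fun ω => 1 + X ω) μ := (integrable_const 1).add hint
  have hint_exp : Integrable (fun ω => exp (X ω)) μ :=
    .of_bound (continuous_exp.comp_aestronglyMeasurable hX) (exp 1) <| hbound.mono fun ω hω => by
      simpa using le_of_abs_le hω
  calc ∫ ω, exp (X ω) ∂μ
      ≤ ∫ ω, (1 + X ω + X ω ^ 2) ∂μ := by
        refine integral_mono_ae hint_exp (hint_one_add.add hint_sq) (hbound.mono fun ω hω => ?_)
        linarith [le_of_abs_le (abs_exp_sub_one_sub_id_le hω)]
    _ = 1 + ∫ ω, X ω ∂μ + ∫ ω, X ω ^ 2 ∂μ := by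
        rw [integral_add hint_one_add hint_sq, integral_add (integrable_const 1) hint]
        simp
    _ ≤ exp (∫ ω, X ω ^ 2 ∂μ) := by linarith [add_one_le_exp (∫ ω, X ω ^ 2 ∂μ)]

lemma integral_eq_zero_of_integral_sq_nonpos (hX : Integrable (fun ω => X ω ^ 2) μ)
    (h : ∫ ω, X ω ^ 2 ∂μ ≤ 0) : ∫ ω, X ω ∂μ = 0 := by
  have hnonneg : 0 ≤ fun ω => X ω ^ 2 := fun ω => sq_nonneg (X ω)
  have hsq : (fun ω => X ω ^ 2) =ᵐ[μ] 0 :=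
    (integral_eq_zero_iff_of_nonneg hnonneg hX).1 (h.antisymm (integral_nonneg hnonneg))
  exact integral_eq_zero_of_ae (hsq.mono fun ω hω => by simpa using hω)

end Moments

lemma measurePreserving_pi_precomp {ι J : Type*} [Fintype ι] [Fintype J] {α : ι → Type*}
    [∀ i, MeasurableSpace (α i)] (μ : ∀ i, Measure (α i)) [∀ i, IsProbabilityMeasure (μ i)]
    {σ : J → ι} (hσ : Function.Injective σ) :
    MeasurePreserving (fun (x : ∀ i, α i) (j : J) => x (σ j)) (Measure.pi μ)
      (Measure.pi fun j => μ (σ j)) := by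
  have hindep : iIndepFun (fun (j : J) (x : ∀ i, α i) => x (σ j)) (Measure.pi μ) :=
    (iIndepFun_pi (X := fun _ x => x) fun _ => aemeasurable_id).precomp hσ
  refine ⟨by fun_prop, ?_⟩
  rw [(iIndepFun_iff_map_fun_eq_pi_map fun j => (measurable_pi_apply (σ j)).aemeasurable).1 hindep]
  exact congrArg Measure.pi (funext fun j => (measurePreserving_eval μ (σ j)).map_eq)

section TwoSample

variable {A B : Type*} {a b N : ℕ}

/-- The mean of `f` over all pairs formed from one entry of each of two samples: the two-sample
U-statistic of order `(1, 1)`. -/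
noncomputable def pairMean (f : A × B → ℝ) (ω : (Fin a → A) × (Fin b → B)) : ℝ :=
  1 / ((a : ℝ) * b) * ∑ i, ∑ j, f (ω.1 i, ω.2 j)

/-- `N` disjoint pairs of sample entries: the first `N` positions of both samples, shifted
cyclically by `k` in the first sample and by `l` in the second, where `(k, l) = kl`. -/
def shiftedPairs (hNa : N ≤ a) (hNb : N ≤ b) (kl : Fin a × Fin b)
    (ω : (Fin a → A) × (Fin b → B)) (i : Fin N) : A × B :=
  (ω.1 (i.castLE hNa + kl.1), ω.2 (i.castLE hNb + kl.2))

lemma pairMean_neg (f : A × B → ℝ) (ω : (Fin a → A) × (Fin b → B)) :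
    pairMean (fun z => -f z) ω = -pairMean f ω := by
  simp only [pairMean, Finset.sum_neg_distrib, mul_neg]

lemma pairMean_sub_const [NeZero a] [NeZero b] (f : A × B → ℝ) (c : ℝ)
    (ω : (Fin a → A) × (Fin b → B)) : pairMean (fun z => f z - c) ω = pairMean f ω - c := by
  have ha : (a : ℝ) ≠ 0 := NeZero.ne _
  have hb : (b : ℝ) ≠ 0 := NeZero.ne _
  simp only [pairMean, Finset.sum_sub_distrib, Finset.sum_const, Finset.card_univ,
    Fintype.card_fin, nsmul_eq_mul]
  field_simp

lemma pairMean_swap (f : A × B → ℝ) (ω : (Fin a → A) × (Fin b → B)) :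
    pairMean (fun z => f z.swap) ω.swap = pairMean f ω := by
  simp only [pairMean, Prod.fst_swap, Prod.snd_swap, Prod.swap_prod_mk]
  rw [Finset.sum_comm, mul_comm (a : ℝ)]

lemma average_sum_shiftedPairs [NeZero a] [NeZero b] (hNa : N ≤ a) (hNb : N ≤ b) (f : A × B → ℝ)
    (ω : (Fin a → A) × (Fin b → B)) :
    ∑ kl, 1 / ((a : ℝ) * b) * ∑ i, f (shiftedPairs hNa hNb kl ω i) = N * pairMean f ω := by
  have hshift (i : Fin N) :
      ∑ kl, f (shiftedPairs hNa hNb kl ω i) = ∑ k, ∑ l, f (ω.1 k, ω.2 l) := by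
    rw [← Fintype.sum_prod_type' fun k l => f (ω.1 k, ω.2 l)]
    exact Equiv.sum_comp ((Equiv.addLeft (i.castLE hNa)).prodCongr (Equiv.addLeft (i.castLE hNb)))
      fun kl => f (ω.1 kl.1, ω.2 kl.2)
  rw [← Finset.mul_sum, Finset.sum_comm]
  simp only [hshift, Finset.sum_const, Finset.card_univ, Fintype.card_fin, nsmul_eq_mul, pairMean]
  ring

lemma sum_one_div_mul_eq_one (a b : ℕ) [NeZero a] [NeZero b] :
    ∑ _kl : Fin a × Fin b, 1 / ((a : ℝ) * b) = 1 := by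
  have ha : (a : ℝ) ≠ 0 := NeZero.ne _
  have hb : (b : ℝ) ≠ 0 := NeZero.ne _
  simp only [Finset.sum_const, Finset.card_univ, Fintype.card_prod, Fintype.card_fin, nsmul_eq_mul,
    Nat.cast_mul]
  field_simp

lemma exp_mul_pairMean_le [NeZero a] [NeZero b] (hNa : N ≤ a) (hNb : N ≤ b) (f : A × B → ℝ)
    (s : ℝ) (ω : (Fin a → A) × (Fin b → B)) :
    exp (N * s * pairMean f ω) ≤
      ∑ kl, 1 / ((a : ℝ) * b) * ∏ i, exp (s * f (shiftedPairs hNa hNb kl ω i)) := by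
  have hmean : N * s * pairMean f ω =
      ∑ kl, 1 / ((a : ℝ) * b) * ∑ i, s * f (shiftedPairs hNa hNb kl ω i) := by
    rw [mul_right_comm, ← average_sum_shiftedPairs hNa hNb f ω, Finset.sum_mul]
    exact Finset.sum_congr rfl fun kl _ => by rw [← Finset.mul_sum]; ring
  rw [hmean]
  simpa only [smul_eq_mul, exp_sum] using convexOn_exp.map_sum_le (t := Finset.univ)
    (w := fun _ => 1 / ((a : ℝ) * b))
    (p := fun kl => ∑ i, s * f (shiftedPairs hNa hNb kl ω i))
    (fun _ _ => by positivity) (sum_one_div_mul_eq_one a b) fun _ _ => Set.mem_univ _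

variable [MeasurableSpace A] [MeasurableSpace B]

/-- The joint law of `a` independent draws from `μ` and `b` further ones from `η`. -/
noncomputable abbrev twoSampleLaw (μ : Measure A) (η : Measure B) (a b : ℕ) :
    Measure ((Fin a → A) × (Fin b → B)) :=
  (Measure.pi fun _ => μ).prod (Measure.pi fun _ => η)

@[fun_prop]
lemma measurable_pairMean {f : A × B → ℝ} (hf : Measurable f) :
    Measurable (pairMean f : (Fin a → A) × (Fin b → B) → ℝ) := by
  unfold pairMean
  fun_prop

variable {μ : Measure A} {η : Measure B} [IsProbabilityMeasure μ] [IsProbabilityMeasure η]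

lemma measurePreserving_shiftedPairs (hNa : N ≤ a) (hNb : N ≤ b) (kl : Fin a × Fin b) :
    MeasurePreserving (shiftedPairs hNa hNb kl) (twoSampleLaw μ η a b)
      (Measure.pi fun _ => μ.prod η) := by
  have : NeZero a := ⟨kl.1.pos.ne'⟩
  have : NeZero b := ⟨kl.2.pos.ne'⟩
  have hfst : Function.Injective fun i : Fin N => i.castLE hNa + kl.1 :=
    (add_left_injective kl.1).comp (Fin.castLE_injective hNa)
  have hsnd : Function.Injective fun i : Fin N => i.castLE hNb + kl.2 :=
    (add_left_injective kl.2).comp (Fin.castLE_injective hNb)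
  exact (measurePreserving_arrowProdEquivProdArrow A B (Fin N) (fun _ => μ) fun _ => η).symm.comp
    ((measurePreserving_pi_precomp (fun _ => μ) hfst).prod
      (measurePreserving_pi_precomp (fun _ => η) hsnd))

variable {f : A × B → ℝ} {s : ℝ}

lemma integrable_prod_exp_shiftedPairs (hNa : N ≤ a) (hNb : N ≤ b) (kl : Fin a × Fin b)
    (hexp : Integrable (fun z => exp (s * f z)) (μ.prod η)) :
    Integrable (fun ω => ∏ i, exp (s * f (shiftedPairs hNa hNb kl ω i))) (twoSampleLaw μ η a b) :=
  (measurePreserving_shiftedPairs hNa hNb kl).integrable_comp_of_integrable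
    (g := fun z => ∏ i, exp (s * f (z i))) (.fintype_prod fun _ => hexp)

lemma integral_prod_exp_shiftedPairs (hNa : N ≤ a) (hNb : N ≤ b) (kl : Fin a × Fin b)
    (hf : Measurable f) :
    ∫ ω, ∏ i, exp (s * f (shiftedPairs hNa hNb kl ω i)) ∂twoSampleLaw μ η a b =
      mgf f (μ.prod η) s ^ N := by
  have hpairs := measurePreserving_shiftedPairs (μ := μ) (η := η) hNa hNb kl
  rw [← integral_map (f := fun z => ∏ i, exp (s * f (z i))) hpairs.aemeasurable
      (Measurable.aestronglyMeasurable (by fun_prop)),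
    hpairs.map_eq, integral_fintype_prod_eq_pow fun z => exp (s * f z), Fintype.card_fin, mgf]

variable [NeZero a] [NeZero b]

lemma integrable_exp_mul_pairMean (hNa : N ≤ a) (hNb : N ≤ b) (hf : Measurable f)
    (hexp : Integrable (fun z => exp (s * f z)) (μ.prod η)) :
    Integrable (fun ω => exp (N * s * pairMean f ω)) (twoSampleLaw μ η a b) := by
  refine (integrable_finsetSum Finset.univ fun kl _ =>
    (integrable_prod_exp_shiftedPairs hNa hNb kl hexp).const_mul (1 / ((a : ℝ) * b))).mono'
    (Measurable.aestronglyMeasurable (by fun_prop)) (.of_forall fun ω => ?_)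
  simpa only [norm_of_nonneg (exp_pos _).le] using exp_mul_pairMean_le hNa hNb f s ω

lemma mgf_pairMean_le (hNa : N ≤ a) (hNb : N ≤ b) (hf : Measurable f)
    (hexp : Integrable (fun z => exp (s * f z)) (μ.prod η)) :
    mgf (pairMean f) (twoSampleLaw μ η a b) (N * s) ≤ mgf f (μ.prod η) s ^ N := by
  have hshift_int (kl) := (integrable_prod_exp_shiftedPairs (μ := μ) (η := η) hNa hNb kl
    hexp).const_mul (1 / ((a : ℝ) * b))
  calc mgf (pairMean f) (twoSampleLaw μ η a b) (N * s)
      ≤ ∫ ω, ∑ kl, 1 / ((a : ℝ) * b) * ∏ i, exp (s * f (shiftedPairs hNa hNb kl ω i))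
          ∂twoSampleLaw μ η a b :=
        integral_mono (integrable_exp_mul_pairMean hNa hNb hf hexp)
          (integrable_finsetSum _ fun kl _ => hshift_int kl) (exp_mul_pairMean_le hNa hNb f s)
    _ = ∑ _kl : Fin a × Fin b, 1 / ((a : ℝ) * b) * mgf f (μ.prod η) s ^ N := by
        rw [integral_finsetSum _ fun kl _ => hshift_int kl]
        simp only [integral_const_mul, integral_prod_exp_shiftedPairs _ _ _ hf]
    _ = mgf f (μ.prod η) s ^ N := by rw [← Finset.sum_mul, sum_one_div_mul_eq_one, one_mul]

lemma measureReal_le_pairMean_le_exp {t ν : ℝ} (hNa : N ≤ a) (hNb : N ≤ b) (hf : Measurable f)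
    (hs : 0 ≤ s) (hbound : ∀ z, |s * f z| ≤ 1) (hmean : ∫ z, f z ∂μ.prod η ≤ 0)
    (hvar : ∫ z, f z ^ 2 ∂μ.prod η ≤ ν) :
    (twoSampleLaw μ η a b).real {ω | t ≤ pairMean f ω} ≤ exp (-(N * (s * t - s ^ 2 * ν))) := by
  have hexp : Integrable (fun z => exp (s * f z)) (μ.prod η) :=
    .of_bound (Measurable.aestronglyMeasurable (by fun_prop)) (exp 1) (.of_forall fun z => by
      simpa using le_of_abs_le (hbound z))
  have hmgf : mgf f (μ.prod η) s ≤ exp (s ^ 2 * ν) := by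
    refine (integral_exp_le_exp_integral_sq (hf.const_mul s).aestronglyMeasurable
      (.of_forall hbound) ?_).trans (exp_le_exp.2 ?_)
    · rw [integral_const_mul]
      exact mul_nonpos_of_nonneg_of_nonpos hs hmean
    · simp only [mul_pow, integral_const_mul]
      gcongr
  calc (twoSampleLaw μ η a b).real {ω | t ≤ pairMean f ω}
      ≤ exp (-(N * s) * t) * mgf (pairMean f) (twoSampleLaw μ η a b) (N * s) :=
        measure_ge_le_exp_mul_mgf t (by positivity) (integrable_exp_mul_pairMean hNa hNb hf hexp)
    _ ≤ exp (-(N * s) * t) * exp (s ^ 2 * ν) ^ N := by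
        gcongr
        exact (mgf_pairMean_le hNa hNb hf hexp).trans (pow_le_pow_left₀ mgf_nonneg hmgf N)
    _ = exp (-(N * (s * t - s ^ 2 * ν))) := by
        rw [← exp_nat_mul, ← exp_add]
        ring_nf

lemma measureReal_integral_add_le_pairMean_le_exp {C t ν : ℝ} (hNa : N ≤ a) (hNb : N ≤ b)
    (hf : Measurable f) (hbound : ∀ z, |f z| ≤ C) (hν : 0 < ν)
    (hvar : ∫ z, f z ^ 2 ∂μ.prod η ≤ ν) (ht : 0 ≤ t) (htC : C * t ≤ 3 * ν) :
    (twoSampleLaw μ η a b).real {ω | ∫ z, f z ∂μ.prod η + t ≤ pairMean f ω} ≤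
      exp (-(N * (t ^ 2 / (8 * ν)))) := by
  set M := ∫ z, f z ∂μ.prod η with hM
  have hint : Integrable f (μ.prod η) := .of_bound hf.aestronglyMeasurable C (.of_forall hbound)
  have hM_bound : |M| ≤ C := by
    simpa using norm_integral_le_of_norm_le_const (μ := μ.prod η) (f := f) (.of_forall hbound)
  have hcentred_mean : ∫ z, (f z - M) ∂μ.prod η ≤ 0 := by
    rw [integral_sub hint (integrable_const M)]
    simp [hM]
  have hcentred_var : ∫ z, (f z - M) ^ 2 ∂μ.prod η ≤ ν := by
    rw [hM, ← variance_eq_integral hf.aemeasurable]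
    exact (variance_le_expectation_sq hf.aestronglyMeasurable).trans hvar
  -- When `C * t = 3 * ν`, `t / (6 * ν)` is the largest slope compatible with `|f - M| ≤ 2 * C`.
  have hcentred_bound (z : A × B) : |t / (6 * ν) * (f z - M)| ≤ 1 := by
    rw [abs_mul, abs_of_nonneg (by positivity), div_mul_eq_mul_div, div_le_one (by positivity)]
    calc t * |f z - M| ≤ t * (|f z| + |M|) := by gcongr; exact abs_sub _ _
      _ ≤ t * (C + C) := by gcongr; exact hbound z
      _ ≤ 6 * ν := by linarith
  have htail := measureReal_le_pairMean_le_exp (μ := μ) (η := η) (t := t) hNa hNb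
    (hf.sub_const M) (by positivity) hcentred_bound hcentred_mean hcentred_var
  simp only [pairMean_sub_const, le_sub_iff_add_le'] at htail
  refine htail.trans (exp_le_exp.2 (neg_le_neg (mul_le_mul_of_nonneg_left ?_ N.cast_nonneg)))
  have hexponent : t / (6 * ν) * t - (t / (6 * ν)) ^ 2 * ν = t ^ 2 / (8 * ν) * (10 / 9) := by
    field_simp
    ring
  rw [hexponent]
  linarith [show 0 ≤ t ^ 2 / (8 * ν) by positivity]

end TwoSample

lemma integrable_uncurry_of_abs_le {A B : Type*} [MeasurableSpace A] [MeasurableSpace B]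
    {μ : Measure A} {η : Measure B} [IsFiniteMeasure μ] [IsFiniteMeasure η] {K : A → B → ℝ} {C : ℝ}
    (hK : Measurable (Function.uncurry K)) (hbound : ∀ x y, |K x y| ≤ C) :
    Integrable (Function.uncurry K) (μ.prod η) :=
  .of_bound hK.aestronglyMeasurable C (.of_forall fun z => hbound z.1 z.2)

section Deviation

variable {A B : Type*} [MeasurableSpace A] [MeasurableSpace B] {μ : Measure A} {η : Measure B}
  [IsProbabilityMeasure μ] [IsProbabilityMeasure η] {K : A → B → ℝ} {a b : ℕ} {ν m l : ℝ}

lemma measure_integral_add_le_pairMean_le (hK : Measurable (Function.uncurry K))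
    (hbound : ∀ x y, |K x y| ≤ 1) (hν : 0 < ν) (hvar : ∫ x, ∫ y, K x y ^ 2 ∂η ∂μ ≤ ν)
    (hm : 0 < m) (hma : m ≤ a) (hmb : m ≤ b) (hl : 0 ≤ l) (hlm : l ^ 2 ≤ 9 * ν * m) :
    twoSampleLaw μ η a b {ω | ∫ x, ∫ y, K x y ∂η ∂μ + l * √(ν / m) ≤
      pairMean (Function.uncurry K) ω} ≤ ENNReal.ofReal (exp (-l ^ 2 / 8)) := by
  have : NeZero a := .of_pos (Nat.cast_pos.1 (hm.trans_le hma))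
  have : NeZero b := .of_pos (Nat.cast_pos.1 (hm.trans_le hmb))
  have hint : Integrable (Function.uncurry K) (μ.prod η) := integrable_uncurry_of_abs_le hK hbound
  have hint_sq : Integrable (Function.uncurry fun x y => K x y ^ 2) (μ.prod η) :=
    integrable_uncurry_of_abs_le (C := 1) (hK.pow_const 2) (by simpa using hbound)
  have hsq : (l * √(ν / m)) ^ 2 = l ^ 2 * ν / m := by
    rw [mul_pow, sq_sqrt (by positivity), mul_div_assoc]
  have hle : l * √(ν / m) ≤ 3 * ν := by
    refine le_of_sq_le_sq ?_ (by positivity)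
    rw [hsq, div_le_iff₀ hm]
    nlinarith
  rw [integral_integral hint_sq] at hvar
  rw [integral_integral hint]
  refine (ENNReal.le_ofReal_iff_toReal_le (measure_ne_top _ _) (exp_pos _).le).2 <|
    (measureReal_integral_add_le_pairMean_le_exp (min_le_left a b) (min_le_right a b) hK
      (fun z => hbound z.1 z.2) hν hvar (by positivity) (by rwa [one_mul])).trans
      (exp_le_exp.2 ?_)
  rw [hsq, neg_div, neg_le_neg_iff]
  have hmN : m ≤ (min a b : ℕ) := by
    rw [Nat.cast_min]
    exact le_min hma hmb
  calc l ^ 2 / 8 = m * (l ^ 2 * ν / m / (8 * ν)) := by field_simp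
    _ ≤ (min a b : ℕ) * (l ^ 2 * ν / m / (8 * ν)) := by gcongr

lemma measure_pairMean_le_integral_sub_le (hK : Measurable (Function.uncurry K))
    (hbound : ∀ x y, |K x y| ≤ 1) (hν : 0 < ν) (hvar : ∫ x, ∫ y, K x y ^ 2 ∂η ∂μ ≤ ν)
    (hm : 0 < m) (hma : m ≤ a) (hmb : m ≤ b) (hl : 0 ≤ l) (hlm : l ^ 2 ≤ 9 * ν * m) :
    twoSampleLaw μ η a b {ω | pairMean (Function.uncurry K) ω ≤
      ∫ x, ∫ y, K x y ∂η ∂μ - l * √(ν / m)} ≤ ENNReal.ofReal (exp (-l ^ 2 / 8)) := by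
  have hneg := measure_integral_add_le_pairMean_le (K := fun x y => -K x y) (μ := μ) (η := η)
    hK.neg (by simpa using hbound) hν (by simpa using hvar) hm hma hmb hl hlm
  refine (measure_mono fun ω hω => ?_).trans hneg
  have hpair : pairMean (Function.uncurry fun x y => -K x y) ω = -pairMean (Function.uncurry K) ω :=
    pairMean_neg _ ω
  simp only [Set.mem_ofPred_eq, integral_neg, hpair] at hω ⊢
  linarith

end Deviation

section Mmd

variable {𝒳 : Type*} {K : 𝒳 → 𝒳 → ℝ} {n1X n1Y n2X n2Y : ℕ}

lemma asymMMD_eq_pairMean (hKsym : ∀ x y, K x y = K y x)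
    (ω : ((Fin n1X → 𝒳) × (Fin n1Y → 𝒳)) × ((Fin n2X → 𝒳) × (Fin n2Y → 𝒳))) :
    asymMMD K n1X n1Y n2X n2Y ω.1 ω.2 =
      pairMean (Function.uncurry K) (ω.2.1, ω.1.1) - pairMean (Function.uncurry K) (ω.2.1, ω.1.2)
      - pairMean (Function.uncurry K) (ω.1.1, ω.2.2)
      + pairMean (Function.uncurry K) (ω.2.2, ω.1.2) := by
  have hswap : (fun z : 𝒳 × 𝒳 => Function.uncurry K z.swap) = Function.uncurry K :=
    funext fun z => hKsym z.2 z.1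
  rw [← pairMean_swap _ (ω.1.1, ω.2.2), hswap]
  rfl

variable [MeasurableSpace 𝒳] {p q : Measure 𝒳}

lemma pairMean_deviates_of_asymMMD_le {t : ℝ} (hKsym : ∀ x y, K x y = K y x)
    (ω : ((Fin n1X → 𝒳) × (Fin n1Y → 𝒳)) × ((Fin n2X → 𝒳) × (Fin n2Y → 𝒳)))
    (hω : asymMMD K n1X n1Y n2X n2Y ω.1 ω.2 ≤ deltaK K p q - 4 * t) :
    pairMean (Function.uncurry K) (ω.2.1, ω.1.1) ≤ ∫ x, ∫ y, K x y ∂p ∂p - t ∨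
      ∫ x, ∫ y, K x y ∂q ∂p + t ≤ pairMean (Function.uncurry K) (ω.2.1, ω.1.2) ∨
      ∫ x, ∫ y, K x y ∂q ∂p + t ≤ pairMean (Function.uncurry K) (ω.1.1, ω.2.2) ∨
      pairMean (Function.uncurry K) (ω.2.2, ω.1.2) ≤ ∫ x, ∫ y, K x y ∂q ∂q - t := by
  rw [asymMMD_eq_pairMean hKsym, deltaK] at hω
  by_contra! hgood
  linarith

variable [IsProbabilityMeasure p] [IsProbabilityMeasure q] {ν : ℝ}

lemma pos_of_deltaK_pos (hK : Measurable (Function.uncurry K)) (hbound : ∀ x y, |K x y| ≤ 1)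
    (hνpp : ∫ x, ∫ y, K x y ^ 2 ∂p ∂p ≤ ν) (hνpq : ∫ x, ∫ y, K x y ^ 2 ∂q ∂p ≤ ν)
    (hνqq : ∫ x, ∫ y, K x y ^ 2 ∂q ∂q ≤ ν) (hδ : 0 < deltaK K p q) : 0 < ν := by
  by_contra! hν
  have hzero (μ η : Measure 𝒳) [IsProbabilityMeasure μ] [IsProbabilityMeasure η]
      (h : ∫ x, ∫ y, K x y ^ 2 ∂η ∂μ ≤ ν) : ∫ x, ∫ y, K x y ∂η ∂μ = 0 := by
    have hint : Integrable (Function.uncurry K) (μ.prod η) := integrable_uncurry_of_abs_le hK hbound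
    have hint_sq : Integrable (Function.uncurry fun x y => K x y ^ 2) (μ.prod η) :=
      integrable_uncurry_of_abs_le (C := 1) (hK.pow_const 2) (by simpa using hbound)
    rw [integral_integral hint_sq] at h
    rw [integral_integral hint]
    exact integral_eq_zero_of_integral_sq_nonpos hint_sq (h.trans hν)
  simp [deltaK, hzero p p hνpp, hzero p q hνpq, hzero q q hνqq] at hδ

lemma measure_asymMMD_le_deltaK_sub_le {m l : ℝ} (hK : Measurable (Function.uncurry K))
    (hKsym : ∀ x y, K x y = K y x) (hbound : ∀ x y, |K x y| ≤ 1) (hν : 0 < ν)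
    (hνpp : ∫ x, ∫ y, K x y ^ 2 ∂p ∂p ≤ ν) (hνpq : ∫ x, ∫ y, K x y ^ 2 ∂q ∂p ≤ ν)
    (hνqq : ∫ x, ∫ y, K x y ^ 2 ∂q ∂q ≤ ν) (hm : 0 < m) (hm1X : m ≤ n1X) (hm1Y : m ≤ n1Y)
    (hm2X : m ≤ n2X) (hm2Y : m ≤ n2Y) (hl : 0 ≤ l) (hlm : l ^ 2 ≤ 9 * ν * m) :
    (twoSampleLaw p q n1X n1Y).prod (twoSampleLaw p q n2X n2Y)
      {ω | asymMMD K n1X n1Y n2X n2Y ω.1 ω.2 ≤ deltaK K p q - 4 * l * √(ν / m)} ≤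
      4 * ENNReal.ofReal (exp (-l ^ 2 / 8)) := by
  set P := (twoSampleLaw p q n1X n1Y).prod (twoSampleLaw p q n2X n2Y)
  have hXX : MeasurePreserving (fun ω => (ω.2.1, ω.1.1)) P (twoSampleLaw p p n2X n1X) :=
    Measure.measurePreserving_swap.comp (measurePreserving_fst.prod measurePreserving_fst)
  have hXY : MeasurePreserving (fun ω => (ω.2.1, ω.1.2)) P (twoSampleLaw p q n2X n1Y) :=
    Measure.measurePreserving_swap.comp (measurePreserving_snd.prod measurePreserving_fst)
  have hYX : MeasurePreserving (fun ω => (ω.1.1, ω.2.2)) P (twoSampleLaw p q n1X n2Y) :=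
    measurePreserving_fst.prod measurePreserving_snd
  have hYY : MeasurePreserving (fun ω => (ω.2.2, ω.1.2)) P (twoSampleLaw q q n2Y n1Y) :=
    Measure.measurePreserving_swap.comp (measurePreserving_snd.prod measurePreserving_snd)
  have hXX_tail := (hXX.measure_preimage_le _).trans
    (measure_pairMean_le_integral_sub_le hK hbound hν hνpp hm hm2X hm1X hl hlm)
  have hXY_tail := (hXY.measure_preimage_le _).trans
    (measure_integral_add_le_pairMean_le hK hbound hν hνpq hm hm2X hm1Y hl hlm)
  have hYX_tail := (hYX.measure_preimage_le _).trans
    (measure_integral_add_le_pairMean_le hK hbound hν hνpq hm hm1X hm2Y hl hlm)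
  have hYY_tail := (hYY.measure_preimage_le _).trans
    (measure_pairMean_le_integral_sub_le hK hbound hν hνqq hm hm2Y hm1Y hl hlm)
  calc P {ω | asymMMD K n1X n1Y n2X n2Y ω.1 ω.2 ≤ deltaK K p q - 4 * l * √(ν / m)}
      ≤ P _ := measure_mono fun ω hω => pairMean_deviates_of_asymMMD_le hKsym
        ω (t := l * √(ν / m)) (by rwa [← mul_assoc])
    _ ≤ _ := (measure_union_le _ _).trans <| add_le_add hXX_tail <|
        (measure_union_le _ _).trans <| add_le_add hXY_tail <|
          (measure_union_le _ _).trans <| add_le_add hYX_tail hYY_tail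
    _ = 4 * ENNReal.ofReal (exp (-l ^ 2 / 8)) := by ring

end Mmd

theorem asym_mmd_power_full_bootstrap_general {𝒳 : Type*} [MeasurableSpace 𝒳] (K : 𝒳 → 𝒳 → ℝ)
    (hKmeas : Measurable (Function.uncurry K)) (hKsym : ∀ x y, K x y = K y x)
    (hKbdd : ∀ x y, |K x y| ≤ 1)
    (p q : Measure 𝒳) [IsProbabilityMeasure p] [IsProbabilityMeasure q] (ν : ℝ)
    (hνpp : ∫ x, ∫ y, (K x y) ^ 2 ∂p ∂p ≤ ν) (hνpq : ∫ x, ∫ y, (K x y) ^ 2 ∂q ∂p ≤ ν)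
    (hνqq : ∫ x, ∫ y, (K x y) ^ 2 ∂q ∂q ≤ ν)
    (n1X n1Y n2X n2Y : ℕ) (m : ℝ) (hm1X : m ≤ n1X) (hm1Y : m ≤ n1Y) (hm2X : m ≤ n2X)
    (hm2Y : m ≤ n2Y) (hδ : 0 < deltaK K p q) (lam₁ lam₂ : ℝ) (hlam₂ : 0 < lam₂)
    (hm : max ((max lam₁ lam₂) ^ 2 / (9 * ν)) ((ν / (deltaK K p q) ^ 2) * (4 * (lam₁ + lam₂)) ^ 2)
      ≤ m) :
    (twoSampleLaw p q n1X n1Y).prod (twoSampleLaw p q n2X n2Y)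
      {ω | asymMMD K n1X n1Y n2X n2Y ω.1 ω.2 ≤ 4 * lam₁ * √(ν / m)} ≤
      ENNReal.ofReal (4 * exp (-lam₂ ^ 2 / 8)) := by
  have hν : 0 < ν := pos_of_deltaK_pos hKmeas hKbdd hνpp hνpq hνqq hδ
  obtain ⟨hm_range, hm_gap⟩ := max_le_iff.1 hm
  have hlam_range : lam₂ ^ 2 ≤ 9 * ν * m :=
    calc lam₂ ^ 2 ≤ (max lam₁ lam₂) ^ 2 := by gcongr; exact le_max_right _ _
      _ ≤ 9 * ν * m := (div_le_iff₀' (by positivity)).1 hm_range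
  have hm_pos : 0 < m :=
    pos_of_mul_pos_right ((pow_pos hlam₂ 2).trans_le hlam_range) (by positivity)
  have hgap : 4 * (lam₁ + lam₂) * √(ν / m) ≤ deltaK K p q := by
    refine le_of_sq_le_sq ?_ hδ.le
    rw [mul_pow, sq_sqrt (by positivity), ← mul_div_assoc, div_le_iff₀ hm_pos]
    rw [div_mul_eq_mul_div, div_le_iff₀ (by positivity)] at hm_gap
    linarith
  rw [ENNReal.ofReal_mul zero_le_four, ENNReal.ofReal_ofNat]
  refine (measure_mono fun ω hω => ?_).trans (measure_asymMMD_le_deltaK_sub_le hKmeas hKsym hKbdd hν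
    hνpp hνpq hνqq hm_pos hm1X hm1Y hm2X hm2Y hlam₂.le hlam_range)
  rw [Set.mem_ofPred_eq] at hω ⊢
  linarith

/-- Theorem 3.3, power part (full bootstrap): under `H₁ : p ≠ q` with `δ_K > 0`, with
`λ₁ = √(8 log(4/α))` and threshold `t_thres = 4λ₁√(ν/(c_a n))`, if for some `λ₂ > 0`,
`n > (1/c_a)·max{max{λ₁,λ₂}²/(9ν), (ν/δ_K²)(4(λ₁+λ₂))²}`, then
`Pr[T̂_a ≤ t_thres] ≤ 4 e^{−λ₂²/8}` under the joint product law of the four samples. -/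
theorem asym_mmd_power_full_bootstrap
    {d : ℕ} (𝒳 : Set (EuclideanSpace ℝ (Fin d))) (h𝒳 : MeasurableSet 𝒳)
    (K : 𝒳 → 𝒳 → ℝ)
    (hKmeas : Measurable (Function.uncurry K))
    (hKsym : ∀ x y, K x y = K y x)
    (hKpsd : ∀ (m : ℕ) (z : Fin m → 𝒳) (a : Fin m → ℝ),
      0 ≤ ∑ i, ∑ j, a i * a j * K (z i) (z j))
    (hKbdd : ∀ x y, |K x y| ≤ 1)
    (p q : Measure 𝒳) [IsProbabilityMeasure p] [IsProbabilityMeasure q]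
    (ν : ℝ) (hν1 : ν ≤ 1)
    (hνpp : ∫ x, ∫ y, (K x y)^2 ∂p ∂p ≤ ν)
    (hνpq : ∫ x, ∫ y, (K x y)^2 ∂q ∂p ≤ ν)
    (hνqq : ∫ x, ∫ y, (K x y)^2 ∂q ∂q ≤ ν)
    (n1X n1Y n2X n2Y : ℕ) (ca : ℝ) (hca : 0 < ca) (hca1 : ca < 1)
    (hbal1 : ca * ((n1X + n1Y + n2X + n2Y : ℕ) : ℝ) ≤ (n1X : ℝ))
    (hbal2 : ca * ((n1X + n1Y + n2X + n2Y : ℕ) : ℝ) ≤ (n1Y : ℝ))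
    (hbal3 : ca * ((n1X + n1Y + n2X + n2Y : ℕ) : ℝ) ≤ (n2X : ℝ))
    (hbal4 : ca * ((n1X + n1Y + n2X + n2Y : ℕ) : ℝ) ≤ (n2Y : ℝ))
    (hH1 : p ≠ q) (hδ : 0 < deltaK K p q)
    (α : ℝ) (hα : 0 < α) (hα1 : α < 1)
    (lam₂ : ℝ) (hlam₂ : 0 < lam₂)
    (hn : ((n1X + n1Y + n2X + n2Y : ℕ) : ℝ) > (1/ca) * max
      ((max (Real.sqrt (8 * Real.log (4/α))) lam₂)^2 / (9 * ν))
      ((ν / (deltaK K p q)^2)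
        * (4 * (Real.sqrt (8 * Real.log (4/α)) + lam₂))^2)) :
    (((Measure.pi fun _ : Fin n1X => p).prod (Measure.pi fun _ : Fin n1Y => q)).prod
      ((Measure.pi fun _ : Fin n2X => p).prod (Measure.pi fun _ : Fin n2Y => q)))
      {ω : ((Fin n1X → 𝒳) × (Fin n1Y → 𝒳)) × ((Fin n2X → 𝒳) × (Fin n2Y → 𝒳)) |
        asymMMD K n1X n1Y n2X n2Y ω.1 ω.2 ≤
          4 * Real.sqrt (8 * Real.log (4/α))
            * Real.sqrt (ν/(ca * ((n1X + n1Y + n2X + n2Y : ℕ) : ℝ)))}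
      ≤ ENNReal.ofReal (4 * Real.exp (-lam₂^2 / 8)) := by
  refine asym_mmd_power_full_bootstrap_general K hKmeas hKsym hKbdd p q ν hνpp hνpq hνqq n1X n1Y n2X
    n2Y _ hbal1 hbal2 hbal3 hbal4 hδ _ lam₂ hlam₂ ?_
  exact (div_le_iff₀' hca).1 (by simpa only [div_eq_inv_mul, mul_one] using hn.le)
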